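/- If a formula φ(x) of the correspondence language is logically equivalent to the (2,2)-standard x-translation of some modal intuitionistic formula, then there exists k ∈ ℕ such that φ(x) is invariant with respect to (2,2)-modal k-asimulations. -/

import Mathlib

namespace ModalIntAsim

/-- Binary relation symbols of the correspondence vocabulary: R, R_□, R_◇. -/
inductive RelSym : Type
  | r | box | diam
deriving DecidableEq

/-- Formulas of the correspondence language: classical first-order logic without
identity, with variables indexed by `ℕ`, unary predicate letters `P n` (n : ℕ),
and the three binary relation symbols. -/
inductive FOForm : Type
  | falsum : FOForm
  | pred : ℕ → ℕ → FOForm            -- `pred n v` is `P_n(x_v)`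
  | rel : RelSym → ℕ → ℕ → FOForm    -- `rel s v w` is `S(x_v, x_w)`
  | conj : FOForm → FOForm → FOForm
  | disj : FOForm → FOForm → FOForm
  | impl : FOForm → FOForm → FOForm
  | all : ℕ → FOForm → FOForm
  | ex : ℕ → FOForm → FOForm

namespace FOForm

/-- Free variables of a correspondence formula. -/
def freeVars : FOForm → Finset ℕ
  | falsum => ∅
  | pred _ v => {v}
  | rel _ v w => {v, w}
  | conj f g => f.freeVars ∪ g.freeVars
  | disj f g => f.freeVars ∪ g.freeVars
  | impl f g => f.freeVars ∪ g.freeVars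
  | all v f => f.freeVars \ {v}
  | ex v f => f.freeVars \ {v}

/-- The unary predicate letters occurring in a formula (the binary relation
symbols R, R_□, R_◇ are regarded as belonging to every vocabulary Σ_φ). -/
def predLetters : FOForm → Finset ℕ
  | falsum => ∅
  | pred n _ => {n}
  | rel _ _ _ => ∅
  | conj f g => f.predLetters ∪ g.predLetters
  | disj f g => f.predLetters ∪ g.predLetters
  | impl f g => f.predLetters ∪ g.predLetters
  | all _ f => f.predLetters
  | ex _ f => f.predLetters

/-- Degree of a formula: the greatest number of nested quantifiers. -/
def degree : FOForm → ℕ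
  | falsum => 0
  | pred _ _ => 0
  | rel _ _ _ => 0
  | conj f g => max f.degree g.degree
  | disj f g => max f.degree g.degree
  | impl f g => max f.degree g.degree
  | all _ f => f.degree + 1
  | ex _ f => f.degree + 1

end FOForm

/-- A model of the correspondence language: a domain together with
interpretations of R, R_□, R_◇ and of the unary predicate letters.
(A Θ-model only consults the letters in Θ.) -/
structure Model : Type 1 where
  U : Type
  rel : U → U → Prop
  relBox : U → U → Prop
  relDiam : U → U → Prop
  pred : ℕ → U → Prop

/-- Interpretation of a binary relation symbol in a model. -/
def Model.relOf (M : Model) : RelSym → M.U → M.U → Prop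
  | .r => M.rel
  | .box => M.relBox
  | .diam => M.relDiam

/-- Tarskian satisfaction of a formula in a model under an assignment. -/
def Sat (M : Model) : FOForm → (ℕ → M.U) → Prop
  | .falsum, _ => False
  | .pred n v, α => M.pred n (α v)
  | .rel s v w, α => M.relOf s (α v) (α w)
  | .conj f g, α => Sat M f α ∧ Sat M g α
  | .disj f g, α => Sat M f α ∨ Sat M g α
  | .impl f g, α => Sat M f α → Sat M g α
  | .all v f, α => ∀ u : M.U, Sat M f (Function.update α v u)
  | .ex v f, α => ∃ u : M.U, Sat M f (Function.update α v u)

/-- `M, a ⊨ φ(x)`: φ is true in `M` under any assignment sending `x` to `a`. -/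
def SatAt (M : Model) (a : M.U) (x : ℕ) (φ : FOForm) : Prop :=
  ∀ α : ℕ → M.U, α x = a → Sat M φ α

/-- Logical equivalence of correspondence formulas. -/
def Equiv (φ ψ : FOForm) : Prop :=
  ∀ (M : Model) (α : ℕ → M.U), Sat M φ α ↔ Sat M ψ α

/-- Logical entailment between correspondence formulas. -/
def Entails (φ ψ : FOForm) : Prop :=
  ∀ (M : Model) (α : ℕ → M.U), Sat M φ α → Sat M ψ α

/-- Modal intuitionistic formulas: built from propositional letters `p n`
using ⊥, ∧, ∨, →, □, ◇. -/
inductive MForm : Type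
  | bot : MForm
  | prop : ℕ → MForm
  | conj : MForm → MForm → MForm
  | disj : MForm → MForm → MForm
  | impl : MForm → MForm → MForm
  | box : MForm → MForm
  | diam : MForm → MForm

/-- The (i,j)-standard x-translation `ST_ij`.  `boxOne = true` means the box
clause (□₁) is used (i = 1), `boxOne = false` means (□₂) (i = 2); likewise
`diamOne = true` means the diamond clause (◇₁) (j = 1) and `diamOne = false`
means (◇₂) (j = 2).  Bound variables are chosen fresh as `x+1`, `x+2`. -/
def ST (boxOne diamOne : Bool) : MForm → ℕ → FOForm
  | .bot, _ => .falsum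
  | .prop n, x => .pred n x
  | .conj I J, x => .conj (ST boxOne diamOne I x) (ST boxOne diamOne J x)
  | .disj I J, x => .disj (ST boxOne diamOne I x) (ST boxOne diamOne J x)
  | .impl I J, x =>
      .all (x + 1) (.impl (.rel .r x (x + 1))
        (.impl (ST boxOne diamOne I (x + 1)) (ST boxOne diamOne J (x + 1))))
  | .box I, x =>
      if boxOne then
        .all (x + 1) (.impl (.rel .box x (x + 1)) (ST boxOne diamOne I (x + 1)))
      else
        .all (x + 1) (.impl (.rel .r x (x + 1))
          (.all (x + 2) (.impl (.rel .box (x + 1) (x + 2)) (ST boxOne diamOne I (x + 2)))))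
  | .diam I, x =>
      if diamOne then
        .ex (x + 1) (.conj (.rel .diam x (x + 1)) (ST boxOne diamOne I (x + 1)))
      else
        .all (x + 1) (.impl (.rel .r x (x + 1))
          (.ex (x + 2) (.conj (.rel .diam (x + 1) (x + 2)) (ST boxOne diamOne I (x + 2)))))

/-! ### Conditions on relations between tuples (the k-asimulation conditions).
A relation between the two models is represented by its two directed
components; `N` is the model of the source tuple and `P` that of the target
tuple.  A tuple `(ā_m, a)` is represented as the list `as ++ [a]`, with
`m = as.length`. -/

section TupleConds

variable (N P : Model)

/-- The "p-type" condition: related tuples are nonempty and of equal length. -/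
def TypeCond (A : List N.U → List P.U → Prop) : Prop :=
  ∀ as bs, A as bs → as ≠ [] ∧ as.length = bs.length

/-- (p-base). -/
def BaseCond (Θ : Set ℕ) (A : List N.U → List P.U → Prop) : Prop :=
  ∀ (as : List N.U) (bs : List P.U) (a : N.U) (b : P.U),
    A (as ++ [a]) (bs ++ [b]) → ∀ n ∈ Θ, N.pred n a → P.pred n b

/-- (p-step). -/
def StepCond (k : ℕ) (A : List N.U → List P.U → Prop)
    (Arev : List P.U → List N.U → Prop) : Prop :=
  ∀ (as : List N.U) (bs : List P.U) (a : N.U) (b d : P.U),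
    A (as ++ [a]) (bs ++ [b]) → P.rel b d → as.length < k →
    ∃ c : N.U, N.rel a c ∧ A (as ++ [a, c]) (bs ++ [b, d]) ∧
      Arev (bs ++ [b, d]) (as ++ [a, c])

/-- (p-box-1). -/
def Box1Cond (k : ℕ) (A : List N.U → List P.U → Prop) : Prop :=
  ∀ (as : List N.U) (bs : List P.U) (a : N.U) (b d : P.U),
    A (as ++ [a]) (bs ++ [b]) → P.relBox b d → as.length < k →
    ∃ c : N.U, N.relBox a c ∧ A (as ++ [a, c]) (bs ++ [b, d])

/-- (p-box-2). -/
def Box2Cond (k : ℕ) (A : List N.U → List P.U → Prop) : Prop :=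
  ∀ (as : List N.U) (bs : List P.U) (a : N.U) (b d f : P.U),
    A (as ++ [a]) (bs ++ [b]) → P.rel b d → P.relBox d f → as.length + 1 < k →
    ∃ c e : N.U, N.rel a c ∧ N.relBox c e ∧ A (as ++ [a, c, e]) (bs ++ [b, d, f])

/-- (p-diam-1). -/
def Diam1Cond (k : ℕ) (A : List N.U → List P.U → Prop) : Prop :=
  ∀ (as : List N.U) (bs : List P.U) (a c : N.U) (b : P.U),
    A (as ++ [a]) (bs ++ [b]) → N.relDiam a c → as.length < k →
    ∃ d : P.U, P.relDiam b d ∧ A (as ++ [a, c]) (bs ++ [b, d])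

/-- (p-diam-2(1)). -/
def Diam2aCond (k : ℕ) (A B : List N.U → List P.U → Prop) : Prop :=
  ∀ (as : List N.U) (bs : List P.U) (a : N.U) (b d : P.U),
    A (as ++ [a]) (bs ++ [b]) → P.rel b d → as.length + 1 < k →
    ∃ c : N.U, N.rel a c ∧ B (as ++ [a, c]) (bs ++ [b, d])

/-- (p-diam-2(2)). -/
def Diam2bCond (k : ℕ) (B A : List N.U → List P.U → Prop) : Prop :=
  ∀ (as : List N.U) (bs : List P.U) (a c : N.U) (b : P.U),
    B (as ++ [a]) (bs ++ [b]) → N.relDiam a c → as.length < k →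
    ∃ d : P.U, P.relDiam b d ∧ A (as ++ [a, c]) (bs ++ [b, d])

end TupleConds

/-- An (i,1)-modal ⟨(M₁,t),(M₂,u)⟩_k-asimulation (j = 1): a single relation `A`
given by its two directed components `A12`, `A21`. -/
def IsKAsimD1 (boxOne : Bool) (Θ : Set ℕ) (M₁ M₂ : Model) (t : M₁.U) (u : M₂.U) (k : ℕ)
    (A12 : List M₁.U → List M₂.U → Prop) (A21 : List M₂.U → List M₁.U → Prop) : Prop :=
  TypeCond M₁ M₂ A12 ∧ TypeCond M₂ M₁ A21 ∧
  A12 [t] [u] ∧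
  BaseCond M₁ M₂ Θ A12 ∧ BaseCond M₂ M₁ Θ A21 ∧
  StepCond M₁ M₂ k A12 A21 ∧ StepCond M₂ M₁ k A21 A12 ∧
  (if boxOne then Box1Cond M₁ M₂ k A12 ∧ Box1Cond M₂ M₁ k A21
   else Box2Cond M₁ M₂ k A12 ∧ Box2Cond M₂ M₁ k A21) ∧
  Diam1Cond M₁ M₂ k A12 ∧ Diam1Cond M₂ M₁ k A21

/-- An (i,2)-modal ⟨(M₁,t),(M₂,u)⟩_k-asimulation (j = 2): an ordered pair
(A, B) of relations, each given by its two directed components. -/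
def IsKAsimD2 (boxOne : Bool) (Θ : Set ℕ) (M₁ M₂ : Model) (t : M₁.U) (u : M₂.U) (k : ℕ)
    (A12 : List M₁.U → List M₂.U → Prop) (A21 : List M₂.U → List M₁.U → Prop)
    (B12 : List M₁.U → List M₂.U → Prop) (B21 : List M₂.U → List M₁.U → Prop) : Prop :=
  TypeCond M₁ M₂ A12 ∧ TypeCond M₂ M₁ A21 ∧
  TypeCond M₁ M₂ B12 ∧ TypeCond M₂ M₁ B21 ∧
  A12 [t] [u] ∧
  BaseCond M₁ M₂ Θ A12 ∧ BaseCond M₂ M₁ Θ A21 ∧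
  StepCond M₁ M₂ k A12 A21 ∧ StepCond M₂ M₁ k A21 A12 ∧
  (if boxOne then Box1Cond M₁ M₂ k A12 ∧ Box1Cond M₂ M₁ k A21
   else Box2Cond M₁ M₂ k A12 ∧ Box2Cond M₂ M₁ k A21) ∧
  Diam2aCond M₁ M₂ k A12 B12 ∧ Diam2aCond M₂ M₁ k A21 B21 ∧
  Diam2bCond M₁ M₂ k B12 A12 ∧ Diam2bCond M₂ M₁ k B21 A21

/-- φ(x) is invariant with respect to (i,1)-modal k-asimulations. -/
def KInvariantD1 (boxOne : Bool) (x : ℕ) (φ : FOForm) (k : ℕ) : Prop :=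
  ∀ Θ : Set ℕ, (φ.predLetters : Set ℕ) ⊆ Θ →
  ∀ (M₁ M₂ : Model) (t : M₁.U) (u : M₂.U)
    (A12 : List M₁.U → List M₂.U → Prop) (A21 : List M₂.U → List M₁.U → Prop),
    IsKAsimD1 boxOne Θ M₁ M₂ t u k A12 A21 →
    ∀ (a : M₁.U) (b : M₂.U), A12 [a] [b] → SatAt M₁ a x φ → SatAt M₂ b x φ

/-- φ(x) is invariant with respect to (i,2)-modal k-asimulations. -/
def KInvariantD2 (boxOne : Bool) (x : ℕ) (φ : FOForm) (k : ℕ) : Prop :=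
  ∀ Θ : Set ℕ, (φ.predLetters : Set ℕ) ⊆ Θ →
  ∀ (M₁ M₂ : Model) (t : M₁.U) (u : M₂.U)
    (A12 : List M₁.U → List M₂.U → Prop) (A21 : List M₂.U → List M₁.U → Prop)
    (B12 : List M₁.U → List M₂.U → Prop) (B21 : List M₂.U → List M₁.U → Prop),
    IsKAsimD2 boxOne Θ M₁ M₂ t u k A12 A21 B12 B21 →
    ∀ (a : M₁.U) (b : M₂.U), A12 [a] [b] → SatAt M₁ a x φ → SatAt M₂ b x φ

/-! ### Conditions for asimulations *simpliciter* (relations between elements). -/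

section ElemConds

variable (N P : Model)

/-- (base). -/
def BaseCondE (Θ : Set ℕ) (A : N.U → P.U → Prop) : Prop :=
  ∀ (a : N.U) (b : P.U), A a b → ∀ n ∈ Θ, N.pred n a → P.pred n b

/-- (step). -/
def StepCondE (A : N.U → P.U → Prop) (Arev : P.U → N.U → Prop) : Prop :=
  ∀ (a : N.U) (b d : P.U), A a b → P.rel b d →
    ∃ c : N.U, N.rel a c ∧ A c d ∧ Arev d c

/-- (box-1). -/
def Box1CondE (A : N.U → P.U → Prop) : Prop :=
  ∀ (a : N.U) (b d : P.U), A a b → P.relBox b d →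
    ∃ c : N.U, N.relBox a c ∧ A c d

/-- (box-2). -/
def Box2CondE (A : N.U → P.U → Prop) : Prop :=
  ∀ (a : N.U) (b d f : P.U), A a b → P.rel b d → P.relBox d f →
    ∃ c e : N.U, N.rel a c ∧ N.relBox c e ∧ A e f

/-- (diam-1). -/
def Diam1CondE (A : N.U → P.U → Prop) : Prop :=
  ∀ (a c : N.U) (b : P.U), A a b → N.relDiam a c →
    ∃ d : P.U, P.relDiam b d ∧ A c d

/-- (diam-2(1)). -/
def Diam2aCondE (A B : N.U → P.U → Prop) : Prop :=
  ∀ (a : N.U) (b d : P.U), A a b → P.rel b d →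
    ∃ c : N.U, N.rel a c ∧ B c d

/-- (diam-2(2)). -/
def Diam2bCondE (B A : N.U → P.U → Prop) : Prop :=
  ∀ (a c : N.U) (b : P.U), B a b → N.relDiam a c →
    ∃ d : P.U, P.relDiam b d ∧ A c d

end ElemConds

/-- An (i,1)-modal ⟨(M₁,t),(M₂,u)⟩-asimulation (j = 1). -/
def IsAsimD1 (boxOne : Bool) (Θ : Set ℕ) (M₁ M₂ : Model) (t : M₁.U) (u : M₂.U)
    (A12 : M₁.U → M₂.U → Prop) (A21 : M₂.U → M₁.U → Prop) : Prop :=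
  A12 t u ∧
  BaseCondE M₁ M₂ Θ A12 ∧ BaseCondE M₂ M₁ Θ A21 ∧
  StepCondE M₁ M₂ A12 A21 ∧ StepCondE M₂ M₁ A21 A12 ∧
  (if boxOne then Box1CondE M₁ M₂ A12 ∧ Box1CondE M₂ M₁ A21
   else Box2CondE M₁ M₂ A12 ∧ Box2CondE M₂ M₁ A21) ∧
  Diam1CondE M₁ M₂ A12 ∧ Diam1CondE M₂ M₁ A21

/-- An (i,2)-modal ⟨(M₁,t),(M₂,u)⟩-asimulation (j = 2). -/
def IsAsimD2 (boxOne : Bool) (Θ : Set ℕ) (M₁ M₂ : Model) (t : M₁.U) (u : M₂.U)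
    (A12 : M₁.U → M₂.U → Prop) (A21 : M₂.U → M₁.U → Prop)
    (B12 : M₁.U → M₂.U → Prop) (B21 : M₂.U → M₁.U → Prop) : Prop :=
  A12 t u ∧
  BaseCondE M₁ M₂ Θ A12 ∧ BaseCondE M₂ M₁ Θ A21 ∧
  StepCondE M₁ M₂ A12 A21 ∧ StepCondE M₂ M₁ A21 A12 ∧
  (if boxOne then Box1CondE M₁ M₂ A12 ∧ Box1CondE M₂ M₁ A21
   else Box2CondE M₁ M₂ A12 ∧ Box2CondE M₂ M₁ A21) ∧
  Diam2aCondE M₁ M₂ A12 B12 ∧ Diam2aCondE M₂ M₁ A21 B21 ∧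
  Diam2bCondE M₁ M₂ B12 A12 ∧ Diam2bCondE M₂ M₁ B21 A21

/-- φ(x) is invariant with respect to (i,1)-modal asimulations. -/
def InvariantD1 (boxOne : Bool) (x : ℕ) (φ : FOForm) : Prop :=
  ∀ Θ : Set ℕ, (φ.predLetters : Set ℕ) ⊆ Θ →
  ∀ (M₁ M₂ : Model) (t : M₁.U) (u : M₂.U)
    (A12 : M₁.U → M₂.U → Prop) (A21 : M₂.U → M₁.U → Prop),
    IsAsimD1 boxOne Θ M₁ M₂ t u A12 A21 →
    ∀ (a : M₁.U) (b : M₂.U), A12 a b → SatAt M₁ a x φ → SatAt M₂ b x φ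

/-- φ(x) is invariant with respect to (i,2)-modal asimulations. -/
def InvariantD2 (boxOne : Bool) (x : ℕ) (φ : FOForm) : Prop :=
  ∀ Θ : Set ℕ, (φ.predLetters : Set ℕ) ⊆ Θ →
  ∀ (M₁ M₂ : Model) (t : M₁.U) (u : M₂.U)
    (A12 : M₁.U → M₂.U → Prop) (A21 : M₂.U → M₁.U → Prop)
    (B12 : M₁.U → M₂.U → Prop) (B21 : M₂.U → M₁.U → Prop),
    IsAsimD2 boxOne Θ M₁ M₂ t u A12 A21 B12 B21 →
    ∀ (a : M₁.U) (b : M₂.U), A12 a b → SatAt M₁ a x φ → SatAt M₂ b x φ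

/-! ### Types, complete conjunctions, ω-saturation. -/

/-- `int(φ,x,l)`: the set of (2,2)-standard x-translations of modal
intuitionistic formulas which are (Σ_φ,x,l)-formulas. -/
def intSet (φ : FOForm) (x l : ℕ) : Set FOForm :=
  {ψ | (∃ I : MForm, ψ = ST false false I x) ∧
    ψ.predLetters ⊆ φ.predLetters ∧ ψ.freeVars ⊆ {x} ∧ ψ.degree ≤ l}

/-- `tp_l(φ(x),M,a)`. -/
def tpSet (φ : FOForm) (x l : ℕ) (M : Model) (a : M.U) : Set FOForm :=
  {ψ | ψ ∈ intSet φ x l ∧ SatAt M a x ψ}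

/-- Conjunction of a nonempty list of formulas. -/
def listConj : FOForm → List FOForm → FOForm
  | ψ, [] => ψ
  | ψ, χ :: L => FOForm.conj ψ (listConj χ L)

/-- Ψ(x) is a complete (φ,x,k)-conjunction. -/
def IsCompleteConj (φ : FOForm) (x k : ℕ) (Ψ : FOForm) : Prop :=
  (∃ (ψ₀ : FOForm) (L : List FOForm), ψ₀ ∈ intSet φ x k ∧
    (∀ χ ∈ L, χ ∈ intSet φ x k) ∧ Ψ = listConj ψ₀ L) ∧
  ∃ (M : Model) (a : M.U), SatAt M a x (FOForm.conj Ψ φ) ∧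
    ∀ ψ ∈ tpSet φ x k M a, Entails Ψ ψ

/-- `int_x(Θ)` for the (i,j)-standard translation. -/
def intX (Θ : Set ℕ) (boxOne diamOne : Bool) (x : ℕ) : Set FOForm :=
  {ψ | (∃ I : MForm, ψ = ST boxOne diamOne I x) ∧ (ψ.predLetters : Set ℕ) ⊆ Θ}

/-- `tp_x(M,t)` for the (i,j)-standard translation. -/
def tpX (Θ : Set ℕ) (boxOne diamOne : Bool) (x : ℕ) (M : Model) (t : M.U) : Set FOForm :=
  {ψ | ψ ∈ intX Θ boxOne diamOne x ∧ SatAt M t x ψ}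

/-- `imp_x(M,t) = ⋂ { t̄p_x(M,u) : t R_◇ u }` (for the (2,2)-translation). -/
def impX (Θ : Set ℕ) (x : ℕ) (M : Model) (t : M.U) : Set FOForm :=
  {ψ | ψ ∈ intX Θ false false x ∧ ∀ u : M.U, M.relDiam t u → ¬ SatAt M u x ψ}

/-- ω-saturation: for every finite tuple of parameters (the first `n` values of
an assignment `α`) and every set `Γ` of formulas with finitely many free
variables beyond the parameters, if `Γ` is consistent with the first-order
theory of `[M,ā]` (i.e. satisfiable together with it in some model), then `Γ`
is realized in `[M,ā]`. -/
def OmegaSaturated (M : Model) : Prop :=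
  ∀ (n : ℕ) (α : ℕ → M.U) (Γ : Set FOForm),
    (∃ k : ℕ, ∀ γ ∈ Γ, γ.freeVars ⊆ Finset.range (n + k)) →
    (∃ (N : Model) (β : ℕ → N.U),
      (∀ ψ : FOForm, ψ.freeVars ⊆ Finset.range n → Sat M ψ α → Sat N ψ β) ∧
      ∀ γ ∈ Γ, Sat N γ β) →
    ∃ α' : ℕ → M.U, (∀ i < n, α' i = α i) ∧ ∀ γ ∈ Γ, Sat M γ α'

/-! ### Relativization to a class κ of models. -/

/-- κ(Θ) is first-order axiomatizable for every finite Θ (with R ∈ Θ): for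
every finite set `S` of unary predicate letters there is a set of Θ-sentences
axiomatizing membership in κ. -/
def FinAxiomatizable (κ : Set Model) : Prop :=
  ∀ S : Finset ℕ, ∃ Ax : Set FOForm,
    (∀ ψ ∈ Ax, ψ.freeVars = ∅ ∧ (ψ.predLetters : Set ℕ) ⊆ (S : Set ℕ)) ∧
    ∀ M : Model, M ∈ κ ↔ ∀ ψ ∈ Ax, ∀ α : ℕ → M.U, Sat M ψ α

/-- φ κ-follows from ψ: {ψ, ¬φ} is not κ-satisfiable. -/
def KappaFollows (κ : Set Model) (ψ φ : FOForm) : Prop :=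
  ¬ ∃ M : Model, M ∈ κ ∧ ∃ α : ℕ → M.U, Sat M ψ α ∧ ¬ Sat M φ α

/-- κ-equivalence of formulas. -/
def KappaEquiv (κ : Set Model) (φ ψ : FOForm) : Prop :=
  KappaFollows κ φ ψ ∧ KappaFollows κ ψ φ

/-- φ(x) is κ-invariant with respect to (i,1)-modal asimulations. -/
def KappaInvariantD1 (κ : Set Model) (boxOne : Bool) (x : ℕ) (φ : FOForm) : Prop :=
  ∀ Θ : Set ℕ, (φ.predLetters : Set ℕ) ⊆ Θ →
  ∀ (M₁ M₂ : Model), M₁ ∈ κ → M₂ ∈ κ →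
  ∀ (t : M₁.U) (u : M₂.U)
    (A12 : M₁.U → M₂.U → Prop) (A21 : M₂.U → M₁.U → Prop),
    IsAsimD1 boxOne Θ M₁ M₂ t u A12 A21 →
    ∀ (a : M₁.U) (b : M₂.U), A12 a b → SatAt M₁ a x φ → SatAt M₂ b x φ

/-- φ(x) is κ-invariant with respect to (i,2)-modal asimulations. -/
def KappaInvariantD2 (κ : Set Model) (boxOne : Bool) (x : ℕ) (φ : FOForm) : Prop :=
  ∀ Θ : Set ℕ, (φ.predLetters : Set ℕ) ⊆ Θ →
  ∀ (M₁ M₂ : Model), M₁ ∈ κ → M₂ ∈ κ →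
  ∀ (t : M₁.U) (u : M₂.U)
    (A12 : M₁.U → M₂.U → Prop) (A21 : M₂.U → M₁.U → Prop)
    (B12 : M₁.U → M₂.U → Prop) (B21 : M₂.U → M₁.U → Prop),
    IsAsimD2 boxOne Θ M₁ M₂ t u A12 A21 B12 B21 →
    ∀ (a : M₁.U) (b : M₂.U), A12 a b → SatAt M₁ a x φ → SatAt M₂ b x φ

/-- φ(x) is κ-invariant with respect to (i,j)-modal asimulations
(`diamOne = true` means j = 1). -/
def KappaInvariant (κ : Set Model) (boxOne diamOne : Bool) (x : ℕ) (φ : FOForm) : Prop :=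
  if diamOne then KappaInvariantD1 κ boxOne x φ else KappaInvariantD2 κ boxOne x φ

/-!
The modal formula may contain letters outside `Θ`, which an asimulation over `Θ` need not respect.
Emptying these letters in both models does not affect `φ` and makes the asimulation respect every
letter. Then each modal formula is preserved along a pair of related tuples of length `m + 1` as
long as `m` plus the degree of its standard translation is at most `k`: each quantifier of the
translation appends one element to the tuples. So the degree of the translation serves as `k`.
-/

/-- Kripke-style forcing of modal intuitionistic formulas in a model, for the clauses
(□₁)/(□₂) and (◇₁)/(◇₂) selected by `boxOne` and `diamOne` as in `ST`. It is the variable-free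
reading of the standard translation. -/
def Forces (boxOne diamOne : Bool) (M : Model) : MForm → M.U → Prop
  | .bot, _ => False
  | .prop n, a => M.pred n a
  | .conj I J, a => Forces boxOne diamOne M I a ∧ Forces boxOne diamOne M J a
  | .disj I J, a => Forces boxOne diamOne M I a ∨ Forces boxOne diamOne M J a
  | .impl I J, a =>
      ∀ b, M.rel a b → Forces boxOne diamOne M I b → Forces boxOne diamOne M J b
  | .box I, a =>
      if boxOne then ∀ b, M.relBox a b → Forces boxOne diamOne M I b
      else ∀ b, M.rel a b → ∀ c, M.relBox b c → Forces boxOne diamOne M I c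
  | .diam I, a =>
      if diamOne then ∃ b, M.relDiam a b ∧ Forces boxOne diamOne M I b
      else ∀ b, M.rel a b → ∃ c, M.relDiam b c ∧ Forces boxOne diamOne M I c

/-- The `Θ`-reduct of a model. Since a `Model` interprets every letter, the letters outside `Θ`
are given the empty interpretation. -/
def Model.restrict (M : Model) (Θ : Set ℕ) : Model where
  U := M.U
  rel := M.rel
  relBox := M.relBox
  relDiam := M.relDiam
  pred n a := n ∈ Θ ∧ M.pred n a

/-- The conditions on the component `A` of an (i,j)-modal k-asimulation from `N` to `P`; an
asimulation consists of two such halves, from `M₁` to `M₂` and back. The auxiliary relation `B`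
is consulted only for j = 2. -/
structure DirectedKAsim (boxOne diamOne : Bool) (Θ : Set ℕ) (N P : Model) (k : ℕ)
    (A : List N.U → List P.U → Prop) (Arev : List P.U → List N.U → Prop)
    (B : List N.U → List P.U → Prop) : Prop where
  length : TypeCond N P A
  base : BaseCond N P Θ A
  step : StepCond N P k A Arev
  box1 : boxOne = true → Box1Cond N P k A
  box2 : boxOne = false → Box2Cond N P k A
  diam1 : diamOne = true → Diam1Cond N P k A
  diam2a : diamOne = false → Diam2aCond N P k A B
  diam2b : diamOne = false → Diam2bCond N P k B A

/-- `I` is preserved along `A` within the budget `k`: the forcing of `I` passes between the last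
elements of related tuples `(ā_m, a)`, `(b̄_m, b)` whenever `m` plus the degree of the translation
of `I` is at most `k`. That degree does not depend on `x`, which is quantified here because the
translation of a subformula has a shifted variable. -/
def PreservedUpTo (boxOne diamOne : Bool) (N P : Model) (k : ℕ)
    (A : List N.U → List P.U → Prop) (I : MForm) : Prop :=
  ∀ (as : List N.U) (bs : List P.U) (a : N.U) (b : P.U) (x : ℕ),
    A (as ++ [a]) (bs ++ [b]) → as.length + (ST boxOne diamOne I x).degree ≤ k →
    Forces boxOne diamOne N I a → Forces boxOne diamOne P I b

/-- φ(x) is invariant with respect to (i,j)-modal k-asimulations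
(`diamOne = true` means j = 1). -/
def KInvariant (boxOne diamOne : Bool) (x : ℕ) (φ : FOForm) (k : ℕ) : Prop :=
  if diamOne then KInvariantD1 boxOne x φ k else KInvariantD2 boxOne x φ k

section Satisfaction

variable (M : Model) {x : ℕ} {φ ψ : FOForm}

theorem satAt_congr (h : Equiv φ ψ) (a : M.U) : SatAt M a x φ ↔ SatAt M a x ψ :=
  forall_congr' fun α => imp_congr_right fun _ => h M α

theorem sat_restrict_iff {Θ : Set ℕ} (hφ : (φ.predLetters : Set ℕ) ⊆ Θ) (α : ℕ → M.U) :
    Sat (M.restrict Θ) φ α ↔ Sat M φ α := by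
  induction φ generalizing α with
  | falsum => exact Iff.rfl
  | pred n v => exact and_iff_right (hφ (Finset.mem_singleton_self n))
  | rel s v w => cases s <;> exact Iff.rfl
  | conj φ ψ ihφ ihψ =>
    rw [FOForm.predLetters, Finset.coe_union, Set.union_subset_iff] at hφ
    exact and_congr (ihφ hφ.1 α) (ihψ hφ.2 α)
  | disj φ ψ ihφ ihψ =>
    rw [FOForm.predLetters, Finset.coe_union, Set.union_subset_iff] at hφ
    exact or_congr (ihφ hφ.1 α) (ihψ hφ.2 α)
  | impl φ ψ ihφ ihψ =>
    rw [FOForm.predLetters, Finset.coe_union, Set.union_subset_iff] at hφ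
    exact imp_congr (ihφ hφ.1 α) (ihψ hφ.2 α)
  | all v φ ih => exact forall_congr' fun u => ih hφ _
  | ex v φ ih => exact exists_congr fun u => ih hφ _

theorem satAt_restrict_iff {Θ : Set ℕ} (hφ : (φ.predLetters : Set ℕ) ⊆ Θ) (a : M.U) :
    SatAt (M.restrict Θ) a x φ ↔ SatAt M a x φ :=
  forall_congr' fun α => imp_congr_right fun _ => sat_restrict_iff M hφ α

theorem sat_ST_iff_forces {boxOne diamOne : Bool} {I : MForm} (α : ℕ → M.U) :
    Sat M (ST boxOne diamOne I x) α ↔ Forces boxOne diamOne M I (α x) := by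
  induction I generalizing x α with
  | bot => exact Iff.rfl
  | prop n => exact Iff.rfl
  | conj I J ihI ihJ => exact and_congr (ihI α) (ihJ α)
  | disj I J ihI ihJ => exact or_congr (ihI α) (ihJ α)
  | impl I J ihI ihJ => simp [ST, Sat, Forces, Model.relOf, ihI, ihJ]
  | box I ih => cases boxOne <;> simp [ST, Sat, Forces, Model.relOf, ih]
  | diam I ih => cases diamOne <;> simp [ST, Sat, Forces, Model.relOf, ih]

theorem satAt_ST_iff_forces {boxOne diamOne : Bool} {I : MForm} {a : M.U} :
    SatAt M a x (ST boxOne diamOne I x) ↔ Forces boxOne diamOne M I a := by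
  simp only [SatAt, sat_ST_iff_forces]
  exact ⟨fun h => h (fun _ => a) rfl, fun h α hα => hα ▸ h⟩

theorem satAt_iff_forces_restrict {boxOne diamOne : Bool} {I : MForm} {Θ : Set ℕ}
    (hφI : Equiv φ (ST boxOne diamOne I x)) (hφ : (φ.predLetters : Set ℕ) ⊆ Θ) (a : M.U) :
    SatAt M a x φ ↔ Forces boxOne diamOne (M.restrict Θ) I a :=
  calc SatAt M a x φ
    _ ↔ SatAt (M.restrict Θ) a x φ := (satAt_restrict_iff M hφ a).symm
    _ ↔ SatAt (M.restrict Θ) a x (ST boxOne diamOne I x) := satAt_congr (M.restrict Θ) hφI a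
    _ ↔ Forces boxOne diamOne (M.restrict Θ) I a := satAt_ST_iff_forces _

end Satisfaction

section Halves

variable {boxOne : Bool} {Θ : Set ℕ} {k : ℕ} {M₁ M₂ : Model} {t : M₁.U} {u : M₂.U}
  {A12 B12 : List M₁.U → List M₂.U → Prop} {A21 B21 : List M₂.U → List M₁.U → Prop}

theorem IsKAsimD1.directedKAsim (h : IsKAsimD1 boxOne Θ M₁ M₂ t u k A12 A21) :
    DirectedKAsim boxOne true Θ M₁ M₂ k A12 A21 A12 ∧
      DirectedKAsim boxOne true Θ M₂ M₁ k A21 A12 A21 := by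
  obtain ⟨length12, length21, -, base12, base21, step12, step21, box, diam12, diam21⟩ := h
  constructor <;> constructor <;> cases boxOne <;> simp_all

theorem IsKAsimD2.directedKAsim (h : IsKAsimD2 boxOne Θ M₁ M₂ t u k A12 A21 B12 B21) :
    DirectedKAsim boxOne false Θ M₁ M₂ k A12 A21 B12 ∧
      DirectedKAsim boxOne false Θ M₂ M₁ k A21 A12 B21 := by
  obtain ⟨length12, length21, -, -, -, base12, base21, step12, step21, box,
    diamA12, diamA21, diamB12, diamB21⟩ := h
  constructor <;> constructor <;> cases boxOne <;> simp_all

end Halves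

namespace DirectedKAsim

variable {boxOne diamOne : Bool} {Θ : Set ℕ} {k x : ℕ} {N P : Model}
  {A B : List N.U → List P.U → Prop} {Arev Brev : List P.U → List N.U → Prop} {I J : MForm}

theorem restrict (h : DirectedKAsim boxOne diamOne Θ N P k A Arev B) :
    DirectedKAsim boxOne diamOne Set.univ (N.restrict Θ) (P.restrict Θ) k A Arev B where
  length := h.length
  base as bs a b hab n _ ha := ⟨ha.1, h.base as bs a b hab n ha.1 ha.2⟩
  step := h.step
  box1 := h.box1
  box2 := h.box2
  diam1 := h.diam1
  diam2a := h.diam2a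
  diam2b := h.diam2b

theorem preservedUpTo_impl (h : DirectedKAsim boxOne diamOne Θ N P k A Arev B)
    (hI : PreservedUpTo boxOne diamOne P N k Arev I)
    (hJ : PreservedUpTo boxOne diamOne N P k A J) :
    PreservedUpTo boxOne diamOne N P k A (.impl I J) := by
  intro as bs a b x hab hk ha d hbd hd
  simp only [ST, FOForm.degree] at hk
  obtain ⟨c, hac, hcd, hdc⟩ := h.step as bs a b d hab hbd (by lia)
  have hlen : as.length = bs.length := by simpa using (h.length _ _ hab).2
  have hc : Forces boxOne diamOne N I c :=
    hI (bs ++ [b]) (as ++ [a]) d c (x + 1) (by simpa using hdc) (by simp; lia) hd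
  exact hJ (as ++ [a]) (bs ++ [b]) c d (x + 1) (by simpa using hcd) (by simp; lia) (ha c hac hc)

theorem preservedUpTo_box (h : DirectedKAsim boxOne diamOne Θ N P k A Arev B)
    (hI : PreservedUpTo boxOne diamOne N P k A I) :
    PreservedUpTo boxOne diamOne N P k A (.box I) := by
  intro as bs a b x hab hk ha
  cases boxOne with
  | true =>
    intro d hbd
    simp only [ST, FOForm.degree, if_true] at hk
    obtain ⟨c, hac, hcd⟩ := h.box1 rfl as bs a b d hab hbd (by lia)
    exact hI (as ++ [a]) (bs ++ [b]) c d (x + 1) (by simpa using hcd) (by simp; lia) (ha c hac)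
  | false =>
    intro d hbd f hdf
    simp only [ST, FOForm.degree, Bool.false_eq_true, if_false] at hk
    obtain ⟨c, e, hac, hce, hef⟩ := h.box2 rfl as bs a b d f hab hbd hdf (by lia)
    exact hI (as ++ [a, c]) (bs ++ [b, d]) e f (x + 2) (by simpa using hef) (by simp; lia)
      (ha c hac e hce)

theorem preservedUpTo_diam (h : DirectedKAsim boxOne diamOne Θ N P k A Arev B)
    (hI : PreservedUpTo boxOne diamOne N P k A I) :
    PreservedUpTo boxOne diamOne N P k A (.diam I) := by
  intro as bs a b x hab hk ha
  cases diamOne with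
  | true =>
    simp only [ST, FOForm.degree, if_true] at hk
    obtain ⟨c, hac, hc⟩ := ha
    obtain ⟨d, hbd, hcd⟩ := h.diam1 rfl as bs a c b hab hac (by lia)
    exact ⟨d, hbd, hI (as ++ [a]) (bs ++ [b]) c d (x + 1) (by simpa using hcd) (by simp; lia) hc⟩
  | false =>
    intro d hbd
    simp only [ST, FOForm.degree, Bool.false_eq_true, if_false] at hk
    obtain ⟨c, hac, hcd⟩ := h.diam2a rfl as bs a b d hab hbd (by lia)
    obtain ⟨e, hce, he⟩ := ha c hac
    obtain ⟨f, hdf, hef⟩ :=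
      h.diam2b rfl (as ++ [a]) (bs ++ [b]) c e d (by simpa using hcd) hce (by simp; lia)
    exact ⟨f, hdf,
      hI (as ++ [a, c]) (bs ++ [b, d]) e f (x + 2) (by simpa using hef) (by simp; lia) he⟩

theorem preservedUpTo (h : DirectedKAsim boxOne diamOne Set.univ N P k A Arev B)
    (hrev : DirectedKAsim boxOne diamOne Set.univ P N k Arev A Brev) (I : MForm) :
    PreservedUpTo boxOne diamOne N P k A I := by
  -- The implication swaps the two directions, so both are carried through the induction.
  induction I generalizing N P A Arev B Brev with
  | bot => exact fun _ _ _ _ _ _ _ ha => ha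
  | prop n => exact fun as bs a b _ hab _ ha => h.base as bs a b hab n trivial ha
  | conj I J ihI ihJ =>
    intro as bs a b x hab hk
    simp only [ST, FOForm.degree] at hk
    exact And.imp (ihI h hrev as bs a b x hab (by lia)) (ihJ h hrev as bs a b x hab (by lia))
  | disj I J ihI ihJ =>
    intro as bs a b x hab hk
    simp only [ST, FOForm.degree] at hk
    exact Or.imp (ihI h hrev as bs a b x hab (by lia)) (ihJ h hrev as bs a b x hab (by lia))
  | impl I J ihI ihJ => exact h.preservedUpTo_impl (ihI hrev h) (ihJ h hrev)
  | box I ih => exact h.preservedUpTo_box (ih h hrev)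
  | diam I ih => exact h.preservedUpTo_diam (ih h hrev)

theorem satAt_of_equiv_ST {φ : FOForm} {a : N.U} {b : P.U}
    (h : DirectedKAsim boxOne diamOne Θ N P k A Arev B)
    (hrev : DirectedKAsim boxOne diamOne Θ P N k Arev A Brev)
    (hφI : Equiv φ (ST boxOne diamOne I x)) (hφ : (φ.predLetters : Set ℕ) ⊆ Θ)
    (hk : (ST boxOne diamOne I x).degree ≤ k) (hab : A [a] [b]) (ha : SatAt N a x φ) :
    SatAt P b x φ := by
  rw [satAt_iff_forces_restrict _ hφI hφ] at ha ⊢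
  exact h.restrict.preservedUpTo hrev.restrict I [] [] a b x hab (by simpa using hk) ha

end DirectedKAsim

theorem statement_9_general (boxOne diamOne : Bool) (x : ℕ) (φ : FOForm) (I : MForm)
    (hφI : Equiv φ (ST boxOne diamOne I x)) :
    KInvariant boxOne diamOne x φ (ST boxOne diamOne I x).degree := by
  cases diamOne with
  | true =>
    intro Θ hφ M₁ M₂ t u A12 A21 hA a b hab
    obtain ⟨h12, h21⟩ := hA.directedKAsim
    exact h12.satAt_of_equiv_ST h21 hφI hφ le_rfl hab
  | false =>
    intro Θ hφ M₁ M₂ t u A12 A21 B12 B21 hA a b hab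
    obtain ⟨h12, h21⟩ := hA.directedKAsim
    exact h12.satAt_of_equiv_ST h21 hφI hφ le_rfl hab

/-- **Corollary (easy direction, case (2,2)).**  If φ(x) is logically
equivalent to a (2,2)-standard x-translation of a modal intuitionistic
formula, then there is a k ∈ ℕ such that φ(x) is invariant with respect to
(2,2)-modal k-asimulations. -/
theorem statement_9 (x : ℕ) (φ : FOForm) (hfv : φ.freeVars ⊆ {x})
    (h : ∃ I : MForm, Equiv φ (ST false false I x)) :
    ∃ k : ℕ, KInvariantD2 false x φ k := by
  obtain ⟨I, hI⟩ := h
  exact ⟨_, statement_9_general false false x φ I hI⟩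

end ModalIntAsim
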